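/- Let R be an integral root system (not necessarily reduced) with positive subsystem R⁺ and W-invariant multiplicity k : R → (0,∞). Then for every element τ ∈ W with τ ≠ id that is a rotation (i.e. τ = r_β ∘ r_α for some reflections with τ a nontrivial product of two reflections), and for every regular x ∈ a: Σ_{α, β ∈ R⁺, r_β ∘ r_α = τ} k_α k_β (α, β) ( coth((α,x)/2) coth((β,x)/2) − 1 ) = 0. -/

import Mathlib

open scoped BigOperators RealInnerProductSpace Classical

noncomputable section

variable {E : Type*} [NormedAddCommGroup E] [InnerProductSpace ℝ E] [FiniteDimensional ℝ E]

/-- The coroot `α∨ = 2α/|α|²`. -/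
def coroot (α : E) : E := (2 / ⟪α, α⟫) • α

/-- The orthogonal reflection `r_α x = x - (α∨, x) α`. -/
def rRefl (α : E) (x : E) : E := x - ⟪coroot α, x⟫ • α

/-- Data of an integral root system with positive subsystem and
a Weyl-invariant positive multiplicity function. -/
structure HOData (E : Type*) [NormedAddCommGroup E] [InnerProductSpace ℝ E] : Type _ where
  R : Finset E
  Rpos : Finset E
  k : E → ℝ
  k_pos : ∀ α ∈ R, 0 < k α
  root_ne_zero : ∀ α ∈ R, α ≠ 0
  pos_subset : Rpos ⊆ R
  pos_char : ∃ u : E, ∀ α ∈ R, (α ∈ Rpos ↔ 0 < ⟪α, u⟫)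
  pos_or_neg : ∀ α ∈ R, α ∈ Rpos ∨ -α ∈ Rpos
  neg_mem : ∀ α ∈ R, -α ∈ R
  integral : ∀ α ∈ R, ∀ β ∈ R, ∃ n : ℤ, ⟪coroot α, β⟫ = (n : ℝ)
  refl_mem : ∀ α ∈ R, ∀ β ∈ R, rRefl α β ∈ R
  k_inv : ∀ α ∈ R, ∀ β ∈ R, k (rRefl α β) = k β

/-- The Weyl group: the subgroup of linear isometries generated by the root reflections. -/
def weylGroup (D : HOData E) : Subgroup (E ≃ₗᵢ[ℝ] E) :=
  Subgroup.closure {w : E ≃ₗᵢ[ℝ] E | ∃ α ∈ D.R, ∀ x, w x = rRefl α x}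

/-- `ρ = (1/2) Σ_{α ∈ R⁺} k_α α`. -/
def rhoHO (D : HOData E) : E := (2:ℝ)⁻¹ • ∑ α ∈ D.Rpos, D.k α • α

/-- Regular points. -/
def HORegular (D : HOData E) (x : E) : Prop := ∀ α ∈ D.R, ⟪α, x⟫ ≠ 0

/-- The (open) positive Weyl chamber. -/
def posChamber (D : HOData E) : Set E := {x | ∀ α ∈ D.Rpos, 0 < ⟪α, x⟫}

/-- The positive indivisible roots `R₀⁺`. -/
def Rpos0 (D : HOData E) : Finset E := D.Rpos.filter (fun α => (2:ℝ)⁻¹ • α ∉ D.R)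

/-- The Opdam function `G_λ` for a real parameter `λ`: an analytic function,
normalized at `0`, satisfying the Cherednik differential-difference system. -/
def IsOpdamR (D : HOData E) (lam : E) (G : E → ℝ) : Prop :=
  AnalyticOnNhd ℝ G Set.univ ∧ G 0 = 1 ∧
  ∀ ξ x, HORegular D x →
    fderiv ℝ G x ξ =
      (∑ α ∈ D.Rpos, D.k α * ⟪α, ξ⟫ / (1 - Real.exp (-⟪α, x⟫)) * (G (rRefl α x) - G x))
      + ⟪rhoHO D + lam, ξ⟫ * G x

/-- The Opdam function `G_λ` for a complex parameter `λ = l1 + i l2 ∈ h`. -/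
def IsOpdamC (D : HOData E) (l1 l2 : E) (G : E → ℂ) : Prop :=
  AnalyticOnNhd ℝ G Set.univ ∧ G 0 = 1 ∧
  ∀ ξ x, HORegular D x →
    fderiv ℝ G x ξ =
      (∑ α ∈ D.Rpos, ((D.k α * ⟪α, ξ⟫ / (1 - Real.exp (-⟪α, x⟫)) : ℝ) : ℂ)
          * (G (rRefl α x) - G x))
      + (((⟪rhoHO D + l1, ξ⟫ : ℝ) : ℂ) + Complex.I * ((⟪l2, ξ⟫ : ℝ) : ℂ)) * G x

/-- The symmetrization `F(x) = |W|⁻¹ Σ_{w ∈ W} G(w x)` (real valued case). -/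
def Fsym (D : HOData E) [Fintype (weylGroup D)] (G : E → ℝ) (x : E) : ℝ :=
  (Fintype.card (weylGroup D) : ℝ)⁻¹ * ∑ w : weylGroup D, G (w.1 x)

/-- The symmetrization `F(x) = |W|⁻¹ Σ_{w ∈ W} G(w x)` (complex valued case). -/
def FsymC (D : HOData E) [Fintype (weylGroup D)] (G : E → ℂ) (x : E) : ℂ :=
  (Fintype.card (weylGroup D) : ℂ)⁻¹ * ∑ w : weylGroup D, G (w.1 x)

/-- `max_{w ∈ W} (w λ, x)`. -/
def maxW (D : HOData E) [Fintype (weylGroup D)] (lam x : E) : ℝ :=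
  ⨆ w : weylGroup D, ⟪w.1 lam, x⟫

/-- Hyperbolic cotangent. -/
def cothR (a : ℝ) : ℝ := Real.cosh a / Real.sinh a

/-- The pairs `(α, β)` of positive roots with `r_β ∘ r_α = τ`. -/
def rotPairs (D : HOData E) (τ : E → E) : Finset (E × E) :=
  (D.Rpos ×ˢ D.Rpos).filter (fun p => (fun x => rRefl p.2 (rRefl p.1 x)) = τ)

/-!
The map `(α, β) ↦ (β, -r_β α)` permutes the pairs of roots at an acute angle with `r_β ∘ r_α = τ`
and preserves the weight `k_α k_β (α, β)`. Such pairs span a root system of type `A₂`, `B₂` or `G₂`,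
so an orbit is one of three explicit cycles, closed up to sign, and the addition formula of `coth`
evaluates the sum of `coth((α, x)/2) coth((β, x)/2)` along it to a constant. The function `sign`,
being the limit of `coth` at infinity, satisfies the same addition formula, so
`sign (α, u) sign (β, u)` has the same sum for every regular `u`. Hence the two weighted sums over
acute pairs agree, and so do those over pairs of positive roots, as the summands are even in `α` and
in `β`. For `u` in the positive chamber the products of signs are all `1`.
-/

section Dynamics

variable {ι K : Type*} [Field K] {s : Finset ι} {f : ι → ι}

theorem sum_comp_eq_of_mapsTo_of_injOn {M : Type*} [AddCommMonoid M] (hf : Set.MapsTo f s s)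
    (hinj : Set.InjOn f s) (g : ι → M) : ∑ x ∈ s, g (f x) = ∑ x ∈ s, g x :=
  Finset.sum_nbij f hf hinj (Finset.surjOn_of_injOn_of_card_le f hf hinj le_rfl) fun _ _ => rfl

theorem sum_birkhoffSum_eq_nsmul_sum {M : Type*} [AddCommMonoid M] (hf : Set.MapsTo f s s)
    (hinj : Set.InjOn f s) (g : ι → M) (n : ℕ) :
    ∑ x ∈ s, birkhoffSum f g n x = n • ∑ x ∈ s, g x := by
  simp only [birkhoffSum]
  rw [Finset.sum_comm]
  simp only [sum_comp_eq_of_mapsTo_of_injOn (hf.iterate _) (hinj.iterate hf _), Finset.sum_const,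
    Finset.card_range]

theorem birkhoffSum_mul_of_invariant (hf : Set.MapsTo f s s) {w : ι → K}
    (hw : ∀ x ∈ s, w (f x) = w x) (g : ι → K) (n : ℕ) {x : ι} (hx : x ∈ s) :
    birkhoffSum f (fun y => w y * g y) n x = w x * birkhoffSum f g n x := by
  have hw_iterate (i : ℕ) : w (f^[i] x) = w x := by
    induction i with
    | zero => rfl
    | succ i ih => rw [Function.iterate_succ_apply', hw _ (hf.iterate i hx), ih]
  simp only [birkhoffSum, hw_iterate, Finset.mul_sum]

theorem sum_mul_eq_sum_mul_of_birkhoffSum_eq [CharZero K] (hf : Set.MapsTo f s s)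
    (hinj : Set.InjOn f s) {w g h : ι → K} (hw : ∀ x ∈ s, w (f x) = w x) {n : ℕ} (hn : n ≠ 0)
    (hgh : ∀ x ∈ s, birkhoffSum f g n x = birkhoffSum f h n x) :
    ∑ x ∈ s, w x * g x = ∑ x ∈ s, w x * h x := by
  refine nsmul_right_injective hn ?_
  simp only [← sum_birkhoffSum_eq_nsmul_sum hf hinj]
  refine Finset.sum_congr rfl fun x hx => ?_
  rw [birkhoffSum_mul_of_invariant hf hw g n hx, birkhoffSum_mul_of_invariant hf hw h n hx,
    hgh x hx]

end Dynamics

section CothLike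

variable {G H A : Type*} [AddCommGroup G] [AddCommGroup H] [CommRing A]

/-- Odd functions that satisfy on `S` the addition formula of the hyperbolic cotangent, written
without division. Besides `coth` itself, its limit at infinity `sign` is an example. -/
structure IsCothLike (S : Set G) (c : G → A) : Prop where
  neg : ∀ a, c (-a) = -c a
  add : ∀ a ∈ S, ∀ b ∈ S, a + b ∈ S → c (a + b) * (c a + c b) = c a * c b + 1

namespace IsCothLike

theorem comp {T : Set H} {c : H → A} (hc : IsCothLike T c) {S : Set G} (f : G →+ H)
    (hf : Set.MapsTo f S T) : IsCothLike S (c ∘ f) where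
  neg a := by simp only [Function.comp_apply, map_neg, hc.neg]
  add a ha b hb hab := by
    simpa only [Function.comp_apply, map_add] using
      hc.add _ (hf ha) _ (hf hb) (map_add f a b ▸ hf hab)

variable {S : Set G} {c : G → A} {a b : G}

theorem sub (hc : IsCothLike S c) (ha : a ∈ S) (hb : b ∈ S) (hba : b - a ∈ S) :
    c b * (c a + c (b - a)) = c a * c (b - a) + 1 := by
  simpa only [add_sub_cancel] using hc.add a ha _ hba (by rwa [add_sub_cancel])

theorem cyclic_sum_A₂ (hc : IsCothLike S c) (ha : a ∈ S) (hb : b ∈ S) (hba : b - a ∈ S) :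
    c a * c b + c b * c (b - a) + c (b - a) * c (-a) = 1 := by
  rw [hc.neg]
  linear_combination hc.sub ha hb hba

theorem cyclic_sum_B₂ (hc : IsCothLike S c) (ha : a ∈ S) (hb : b ∈ S) (hba : b - a ∈ S)
    (hbaa : b - a - a ∈ S) :
    c a * c b + c b * c (b - a) + c (b - a) * c (b - a - a) + c (b - a - a) * c (-a) = 2 := by
  rw [hc.neg]
  linear_combination hc.sub ha hb hba + hc.sub ha hba hbaa

theorem cyclic_sum_G₂ (hc : IsCothLike S c) (ha : a ∈ S) (hb : b ∈ S) (hba : b - a ∈ S)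
    (hsum : (b - a) + (b - a - a) ∈ S) (hbaa : b - a - a ∈ S) (hbaaa : b - a - a - a ∈ S) :
    c a * c b + c b * c (b - a) + c (b - a) * c ((b - a) + (b - a - a)) +
      c ((b - a) + (b - a - a)) * c (b - a - a) + c (b - a - a) * c (b - a - a - a) +
      c (b - a - a - a) * c (-a) = 4 := by
  rw [hc.neg]
  linear_combination hc.sub ha hb hba + hc.sub ha hba hbaa + hc.sub ha hbaa hbaaa +
    hc.add _ hba _ hbaa hsum

end IsCothLike

theorem cothR_neg (a : ℝ) : cothR (-a) = -cothR a := by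
  simp only [cothR, Real.cosh_neg, Real.sinh_neg, div_neg]

theorem cothR_add_mul {a b : ℝ} (ha : a ≠ 0) (hb : b ≠ 0) (hab : a + b ≠ 0) :
    cothR (a + b) * (cothR a + cothR b) = cothR a * cothR b + 1 := by
  have ha' := Real.sinh_ne_zero.mpr ha
  have hb' := Real.sinh_ne_zero.mpr hb
  have hab' := Real.sinh_ne_zero.mpr hab
  have hsum : cothR a + cothR b = Real.sinh (a + b) / (Real.sinh a * Real.sinh b) := by
    rw [cothR, cothR, div_add_div _ _ ha' hb', Real.sinh_add, add_comm]
  rw [hsum, cothR, cothR, cothR, div_mul_div_cancel₀ hab', Real.cosh_add]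
  field_simp

theorem isCothLike_cothR_div_two : IsCothLike ({0}ᶜ : Set ℝ) (fun a => cothR (a / 2)) where
  neg a := by rw [neg_div, cothR_neg]
  add a ha b hb hab := by
    have half_ne_zero {t : ℝ} (ht : t ≠ 0) : t / 2 ≠ 0 := div_ne_zero ht two_ne_zero
    rw [add_div]
    exact cothR_add_mul (half_ne_zero ha) (half_ne_zero hb) (add_div a b 2 ▸ half_ne_zero hab)

theorem isCothLike_sign : IsCothLike ({0}ᶜ : Set ℝ) (fun a => (SignType.sign a : ℝ)) where
  neg a := by simp only [Left.sign_neg, SignType.coe_neg]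
  add a ha b hb _ := by
    rcases lt_or_gt_of_ne ha with ha | ha <;> rcases lt_or_gt_of_ne hb with hb | hb
    · norm_num [sign_neg ha, sign_neg hb, sign_neg (add_neg ha hb)]
    · simp [sign_neg ha, sign_pos hb]
    · simp [sign_pos ha, sign_neg hb]
    · norm_num [sign_pos ha, sign_pos hb, sign_pos (add_pos ha hb)]

end CothLike

section Reflection

variable {V : Type*} [NormedAddCommGroup V] [InnerProductSpace ℝ V]

theorem inner_coroot (α x : V) : ⟪coroot α, x⟫ = 2 * ⟪α, x⟫ / ⟪α, α⟫ := by
  rw [coroot, real_inner_smul_left, div_mul_eq_mul_div]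

theorem rRefl_eq_reflection (α : V) : rRefl α = (ℝ ∙ α)ᗮ.reflection := by
  funext x
  rw [Submodule.reflection_orthogonal_apply, Submodule.reflection_singleton_apply, rRefl,
    inner_coroot, real_inner_self_eq_norm_sq, RCLike.ofReal_real_eq_id, id, mul_div_assoc]
  module

theorem inner_rRefl_rRefl (α x y : V) : ⟪rRefl α x, rRefl α y⟫ = ⟪x, y⟫ := by
  rw [rRefl_eq_reflection, LinearIsometryEquiv.inner_map_map]

theorem rRefl_self (α : V) : rRefl α α = -α := by
  rw [rRefl_eq_reflection, Submodule.reflection_orthogonalComplement_singleton_eq_neg]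

theorem rRefl_rRefl (α x : V) : rRefl α (rRefl α x) = x := by
  rw [rRefl_eq_reflection, Submodule.reflection_reflection]

theorem rRefl_neg (α x : V) : rRefl α (-x) = -rRefl α x := by
  rw [rRefl_eq_reflection, map_neg]

theorem rRefl_smul_left {t : ℝ} (ht : t ≠ 0) (α : V) : rRefl (t • α) = rRefl α := by
  simp only [rRefl_eq_reflection, Submodule.span_singleton_smul_eq ht.isUnit]

theorem rRefl_neg_left (α : V) : rRefl (-α) = rRefl α := by
  rw [← neg_one_smul ℝ α, rRefl_smul_left (neg_ne_zero.mpr one_ne_zero)]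

theorem rRefl_map {V' : Type*} [NormedAddCommGroup V'] [InnerProductSpace ℝ V'] (g : V →ₗᵢ[ℝ] V')
    (α x : V) : rRefl (g α) (g x) = g (rRefl α x) := by
  simp only [rRefl, inner_coroot, g.inner_map_map, map_sub, map_smul]

theorem rRefl_rRefl_rRefl (α β x : V) :
    rRefl (rRefl β α) (rRefl β x) = rRefl β (rRefl α x) := by
  rw [rRefl_eq_reflection β]
  exact rRefl_map (ℝ ∙ β)ᗮ.reflection.toLinearIsometry α x

theorem real_inner_mul_inner_self_lt_of_rRefl_ne {α β : V} (hα : α ≠ 0) (hβ : β ≠ 0)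
    (h : rRefl α ≠ rRefl β) : ⟪α, β⟫ * ⟪α, β⟫ < ⟪α, α⟫ * ⟪β, β⟫ := by
  refine (real_inner_mul_inner_self_le α β).lt_of_ne fun heq => h ?_
  have hnorm : ‖⟪α, β⟫‖ = ‖α‖ * ‖β‖ := by
    rw [← sq_eq_sq₀ (norm_nonneg _) (by positivity), Real.norm_eq_abs, sq_abs, mul_pow,
      ← real_inner_self_eq_norm_sq, ← real_inner_self_eq_norm_sq, ← heq, sq]
  obtain ⟨t, ht, rfl⟩ := (norm_inner_eq_norm_iff hα hβ).mp hnorm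
  rw [rRefl_smul_left ht]

theorem inner_coroot_mul_inner_coroot_lt_four {α β : V} (hα : α ≠ 0) (hβ : β ≠ 0)
    (h : rRefl α ≠ rRefl β) : ⟪coroot β, α⟫ * ⟪coroot α, β⟫ < 4 := by
  have hαα : 0 < ⟪α, α⟫ := real_inner_self_pos.mpr hα
  have hββ : 0 < ⟪β, β⟫ := real_inner_self_pos.mpr hβ
  rw [inner_coroot, inner_coroot, real_inner_comm α β, div_mul_div_comm,
    div_lt_iff₀ (by positivity)]
  linarith [real_inner_mul_inner_self_lt_of_rRefl_ne hα hβ h]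

theorem cartan_integers_of_acute {α β : V} (hα : α ≠ 0) (hβ : β ≠ 0) (hacute : 0 < ⟪α, β⟫)
    (h : rRefl α ≠ rRefl β) {m n : ℤ} (hm : ⟪coroot β, α⟫ = m) (hn : ⟪coroot α, β⟫ = n) :
    (m = 1 ∧ n ∈ Set.Icc 1 3) ∨ (n = 1 ∧ m ∈ Set.Icc 1 3) := by
  have hαα : 0 < ⟪α, α⟫ := real_inner_self_pos.mpr hα
  have hββ : 0 < ⟪β, β⟫ := real_inner_self_pos.mpr hβ
  have hm_pos : 0 < m := by
    rw [← Int.cast_pos (R := ℝ), ← hm, inner_coroot, real_inner_comm]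
    positivity
  have hn_pos : 0 < n := by
    rw [← Int.cast_pos (R := ℝ), ← hn, inner_coroot]
    positivity
  have hmn : m * n < 4 := by
    have := inner_coroot_mul_inner_coroot_lt_four hα hβ h
    rw [hm, hn] at this
    exact_mod_cast this
  have hone : m = 1 ∨ n = 1 := by
    by_contra! hne
    nlinarith [show 2 ≤ m by omega, show 2 ≤ n by omega]
  rcases hone with rfl | rfl
  · exact .inl ⟨rfl, by omega, by omega⟩
  · exact .inr ⟨rfl, by omega, by omega⟩

end Reflection

section RotStep

variable {V : Type*} [NormedAddCommGroup V] [InnerProductSpace ℝ V]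

/-- The map `(α, β) ↦ (β, -r_β α)` on pairs. It preserves the product `r_β ∘ r_α`; the sign makes
it preserve the inner product `(α, β)` too. -/
def rotStep (p : V × V) : V × V := (p.2, -rRefl p.2 p.1)

theorem rotStep_injective : Function.Injective (rotStep : V × V → V × V) := by
  rintro ⟨α, β⟩ ⟨α', β'⟩ h
  simp only [rotStep, Prod.mk.injEq, neg_inj] at h
  obtain ⟨rfl, h⟩ := h
  rw [← rRefl_rRefl β α, h, rRefl_rRefl]

theorem rotStep_neg (p : V × V) : rotStep (-p) = -rotStep p := by
  simp only [rotStep, Prod.fst_neg, Prod.snd_neg, rRefl_neg_left, rRefl_neg, Prod.neg_mk]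

theorem inner_rotStep (p : V × V) : ⟪(rotStep p).1, (rotStep p).2⟫ = ⟪p.1, p.2⟫ := by
  rw [rotStep, inner_neg_right, ← inner_neg_left, ← rRefl_self, inner_rRefl_rRefl, real_inner_comm]

theorem rRefl_comp_rRefl_rotStep (p : V × V) :
    (fun x => rRefl (rotStep p).2 (rRefl (rotStep p).1 x)) = fun x => rRefl p.2 (rRefl p.1 x) := by
  funext x
  rw [rotStep, rRefl_neg_left, rRefl_rRefl_rRefl]

theorem birkhoffSum_rotStep_neg {c : V → ℝ} (hc : ∀ α, c (-α) = -c α) (n : ℕ) (p : V × V) :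
    birkhoffSum rotStep (fun q => c q.1 * c q.2) n (-p) =
      birkhoffSum rotStep (fun q => c q.1 * c q.2) n p := by
  induction n generalizing p with
  | zero => rfl
  | succ n ih =>
    simp only [birkhoffSum_succ', rotStep_neg, ih, Prod.fst_neg, Prod.snd_neg, hc, neg_mul_neg]

/-- A pair of roots with Cartan integers `(β∨, α) = m` and `(α∨, β) = n`. -/
structure IsCartanPair (D : HOData V) (α β : V) (m n : ℤ) : Prop where
  fst_mem : α ∈ D.R
  snd_mem : β ∈ D.R
  inner_coroot_snd : ⟪coroot β, α⟫ = m
  inner_coroot_fst : ⟪coroot α, β⟫ = n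

theorem IsCartanPair.rotStep {D : HOData V} {α β γ : V} {m n : ℤ} (h : IsCartanPair D α β m n)
    (hγ : m • β - α = γ) : rotStep (α, β) = (β, γ) ∧ IsCartanPair D β γ n m := by
  obtain rfl : -rRefl β α = γ := by
    rw [← hγ, rRefl, h.inner_coroot_snd, Int.cast_smul_eq_zsmul, neg_sub]
  have hinner : ⟪β, -rRefl β α⟫ = ⟪α, β⟫ := inner_rotStep (α, β)
  refine ⟨rfl, h.snd_mem, D.neg_mem _ (D.refl_mem _ h.snd_mem _ h.fst_mem), ?_, ?_⟩
  · rw [← h.inner_coroot_fst, inner_coroot, inner_coroot, real_inner_comm, hinner, inner_neg_neg,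
      inner_rRefl_rRefl]
  · rw [← h.inner_coroot_snd, inner_coroot, inner_coroot, hinner, real_inner_comm]

/-- The `rotStep`-orbit of `p` closes up to sign after `N` steps, and the sum along it of the
products `c α * c β` takes the same value `K` for all `coth`-like functions `c`. -/
structure IsCothOrbit (D : HOData V) (p : V × V) (N : ℕ) (K : ℝ) : Prop where
  iterate_eq_neg : rotStep^[N] p = -p
  birkhoffSum_eq : ∀ c : V → ℝ, IsCothLike (D.R : Set V) c →
    birkhoffSum rotStep (fun q => c q.1 * c q.2) N p = K

variable {D : HOData V} {α β : V} {p : V × V}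

theorem IsCartanPair.isCothOrbit_A₂ (h : IsCartanPair D α β 1 1) :
    IsCothOrbit D (α, β) 3 1 := by
  obtain ⟨e₁, h₁⟩ := h.rotStep (γ := β - α) (by module)
  obtain ⟨e₂, h₂⟩ := h₁.rotStep (γ := -α) (by module)
  obtain ⟨e₃, -⟩ := h₂.rotStep (γ := -β) (by module)
  refine ⟨by simp [e₁, e₂, e₃], fun c hc => ?_⟩
  simp only [birkhoffSum_succ', birkhoffSum_zero, e₁, e₂]
  linear_combination hc.cyclic_sum_A₂ h.fst_mem h.snd_mem h₁.snd_mem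

theorem IsCartanPair.isCothOrbit_B₂ (h : IsCartanPair D α β 1 2) :
    IsCothOrbit D (α, β) 4 2 := by
  obtain ⟨e₁, h₁⟩ := h.rotStep (γ := β - α) (by module)
  obtain ⟨e₂, h₂⟩ := h₁.rotStep (γ := β - α - α) (by module)
  obtain ⟨e₃, h₃⟩ := h₂.rotStep (γ := -α) (by module)
  obtain ⟨e₄, -⟩ := h₃.rotStep (γ := -β) (by module)
  refine ⟨by simp [e₁, e₂, e₃, e₄], fun c hc => ?_⟩
  simp only [birkhoffSum_succ', birkhoffSum_zero, e₁, e₂, e₃]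
  linear_combination hc.cyclic_sum_B₂ h.fst_mem h.snd_mem h₁.snd_mem h₂.snd_mem

theorem IsCartanPair.isCothOrbit_G₂ (h : IsCartanPair D α β 1 3) :
    IsCothOrbit D (α, β) 6 4 := by
  obtain ⟨e₁, h₁⟩ := h.rotStep (γ := β - α) (by module)
  obtain ⟨e₂, h₂⟩ := h₁.rotStep (γ := (β - α) + (β - α - α)) (by module)
  obtain ⟨e₃, h₃⟩ := h₂.rotStep (γ := β - α - α) (by module)
  obtain ⟨e₄, h₄⟩ := h₃.rotStep (γ := β - α - α - α) (by module)
  obtain ⟨e₅, h₅⟩ := h₄.rotStep (γ := -α) (by module)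
  obtain ⟨e₆, -⟩ := h₅.rotStep (γ := -β) (by module)
  refine ⟨by simp [e₁, e₂, e₃, e₄, e₅, e₆], fun c hc => ?_⟩
  simp only [birkhoffSum_succ', birkhoffSum_zero, e₁, e₂, e₃, e₄, e₅]
  linear_combination hc.cyclic_sum_G₂ h.fst_mem h.snd_mem h₁.snd_mem h₂.snd_mem h₃.snd_mem
    h₄.snd_mem

namespace IsCothOrbit

variable {N : ℕ} {K : ℝ}

theorem of_rotStep (h : IsCothOrbit D (rotStep p) N K) : IsCothOrbit D p N K := by
  have hiter : rotStep^[N] p = -p := rotStep_injective <| by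
    rw [← Function.iterate_succ_apply' rotStep, Function.iterate_succ_apply, h.iterate_eq_neg,
      rotStep_neg]
  refine ⟨hiter, fun c hc => ?_⟩
  rw [← h.birkhoffSum_eq c hc, eq_comm, ← sub_eq_zero, birkhoffSum_apply_sub_birkhoffSum, hiter]
  simp only [Prod.fst_neg, Prod.snd_neg, hc.neg, neg_mul_neg, sub_self]

theorem birkhoffSum_mul_eq (h : IsCothOrbit D p N K) {c : V → ℝ}
    (hc : IsCothLike (D.R : Set V) c) (j : ℕ) :
    birkhoffSum rotStep (fun q => c q.1 * c q.2) (N * j) p = j * K := by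
  induction j with
  | zero => simp
  | succ j ih =>
    rw [Nat.mul_succ, add_comm, birkhoffSum_add, h.birkhoffSum_eq c hc, h.iterate_eq_neg,
      birkhoffSum_rotStep_neg hc.neg, ih]
    push_cast
    ring

end IsCothOrbit

theorem IsCartanPair.exists_isCothOrbit_of_one {n : ℤ} (h : IsCartanPair D α β 1 n)
    (hn : n ∈ Set.Icc 1 3) : ∃ N K, N ∣ 12 ∧ IsCothOrbit D (α, β) N K := by
  obtain ⟨hn₁, hn₃⟩ := hn
  interval_cases n
  · exact ⟨3, 1, by norm_num, h.isCothOrbit_A₂⟩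
  · exact ⟨4, 2, by norm_num, h.isCothOrbit_B₂⟩
  · exact ⟨6, 4, by norm_num, h.isCothOrbit_G₂⟩

theorem exists_isCothOrbit (hα : α ∈ D.R) (hβ : β ∈ D.R) (hacute : 0 < ⟪α, β⟫)
    (hne : rRefl α ≠ rRefl β) : ∃ N K, N ∣ 12 ∧ IsCothOrbit D (α, β) N K := by
  obtain ⟨m, hm⟩ := D.integral β hβ α hα
  obtain ⟨n, hn⟩ := D.integral α hα β hβ
  have hpair : IsCartanPair D α β m n := ⟨hα, hβ, hm, hn⟩
  rcases cartan_integers_of_acute (D.root_ne_zero α hα) (D.root_ne_zero β hβ) hacute hne hm hn with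
    ⟨rfl, hn⟩ | ⟨rfl, hm⟩
  · exact hpair.exists_isCothOrbit_of_one hn
  · obtain ⟨hstep, hpair'⟩ := hpair.rotStep rfl
    obtain ⟨N, K, hN, hK⟩ := hpair'.exists_isCothOrbit_of_one hm
    exact ⟨N, K, hN, .of_rotStep (hstep ▸ hK)⟩

end RotStep

section RotationSums

variable {V : Type*} [NormedAddCommGroup V] [InnerProductSpace ℝ V] {D : HOData V} {τ : V → V}

/-- The pairs of roots at an acute angle with `r_β ∘ r_α = τ`. Among the four pairs `(±α, ±β)` with
`(α, β) ≠ 0` exactly two are acute, so these pairs cover `rotPairs` twice, and unlike `rotPairs`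
they are stable under `rotStep`. -/
def acutePairs (D : HOData V) (τ : V → V) : Finset (V × V) :=
  (D.R ×ˢ D.R).filter fun p => (fun x => rRefl p.2 (rRefl p.1 x)) = τ ∧ 0 < ⟪p.1, p.2⟫

theorem mem_acutePairs {p : V × V} :
    p ∈ acutePairs D τ ↔ (p.1 ∈ D.R ∧ p.2 ∈ D.R) ∧
      (fun x => rRefl p.2 (rRefl p.1 x)) = τ ∧ 0 < ⟪p.1, p.2⟫ := by
  rw [acutePairs, Finset.mem_filter, Finset.mem_product]

theorem mapsTo_rotStep_acutePairs :
    Set.MapsTo rotStep (acutePairs D τ : Set (V × V)) (acutePairs D τ) := by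
  intro p hp
  rw [Finset.mem_coe, mem_acutePairs] at hp ⊢
  obtain ⟨⟨hα, hβ⟩, hτ, hacute⟩ := hp
  rw [rRefl_comp_rRefl_rotStep, inner_rotStep]
  exact ⟨⟨hβ, D.neg_mem _ (D.refl_mem _ hβ _ hα)⟩, hτ, hacute⟩

/-- The number 12 is a common multiple of the lengths 3, 4 and 6 of the orbits up to sign. -/
theorem birkhoffSum_twelve_eq (hτ : τ ≠ id) {p : V × V} (hp : p ∈ acutePairs D τ) {c s : V → ℝ}
    (hc : IsCothLike (D.R : Set V) c) (hs : IsCothLike (D.R : Set V) s) :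
    birkhoffSum rotStep (fun q => c q.1 * c q.2) 12 p =
      birkhoffSum rotStep (fun q => s q.1 * s q.2) 12 p := by
  obtain ⟨⟨hα, hβ⟩, rfl, hacute⟩ := mem_acutePairs.mp hp
  have hne : rRefl p.1 ≠ rRefl p.2 := fun h => hτ <| by
    funext x
    rw [h, rRefl_rRefl, id]
  obtain ⟨N, K, ⟨j, hj⟩, hK⟩ := exists_isCothOrbit hα hβ hacute hne
  rw [hj, hK.birkhoffSum_mul_eq hc, hK.birkhoffSum_mul_eq hs]

variable {k : V → ℝ}

/-- Invariance of `k` on the roots under the reflections that generate the Weyl group, without the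
positivity required of the multiplicity in `HOData`. -/
def IsWeylInvariant (D : HOData V) (k : V → ℝ) : Prop :=
  ∀ α ∈ D.R, ∀ β ∈ D.R, k (rRefl α β) = k β

theorem IsWeylInvariant.apply_neg (hk : IsWeylInvariant D k) {α : V} (hα : α ∈ D.R) :
    k (-α) = k α := by
  rw [← rRefl_self, hk α hα α hα]

theorem weight_rotStep (hk : IsWeylInvariant D k) {p : V × V}
    (hp : p ∈ acutePairs D τ) :
    k (rotStep p).1 * k (rotStep p).2 * ⟪(rotStep p).1, (rotStep p).2⟫ =
      k p.1 * k p.2 * ⟪p.1, p.2⟫ := by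
  obtain ⟨⟨hα, hβ⟩, -⟩ := mem_acutePairs.mp hp
  rw [inner_rotStep, rotStep, hk.apply_neg (D.refl_mem _ hβ _ hα), hk _ hβ _ hα,
    mul_comm (k p.2)]

theorem sum_acutePairs_eq_sum_acutePairs (hτ : τ ≠ id)
    (hk : IsWeylInvariant D k) {c s : V → ℝ}
    (hc : IsCothLike (D.R : Set V) c) (hs : IsCothLike (D.R : Set V) s) :
    ∑ p ∈ acutePairs D τ, k p.1 * k p.2 * ⟪p.1, p.2⟫ * (c p.1 * c p.2) =
      ∑ p ∈ acutePairs D τ, k p.1 * k p.2 * ⟪p.1, p.2⟫ * (s p.1 * s p.2) :=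
  sum_mul_eq_sum_mul_of_birkhoffSum_eq mapsTo_rotStep_acutePairs rotStep_injective.injOn
    (fun _ hp => weight_rotStep hk hp) (by norm_num : 12 ≠ 0)
    fun _ hp => birkhoffSum_twelve_eq hτ hp hc hs

theorem sum_roots_eq_sum_pos {M : Type*} [AddCommMonoid M] (D : HOData V) (f : V → M) :
    ∑ α ∈ D.R, f α = ∑ α ∈ D.Rpos, (f α + f (-α)) := by
  obtain ⟨u, hu⟩ := D.pos_char
  have hunion : D.R = D.Rpos ∪ D.Rpos.image Neg.neg := by
    ext α
    simp only [Finset.mem_union, Finset.mem_image]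
    constructor
    · exact fun h => (D.pos_or_neg α h).imp_right fun h' => ⟨-α, h', neg_neg α⟩
    · rintro (h | ⟨β, h, rfl⟩)
      · exact D.pos_subset h
      · exact D.neg_mem _ (D.pos_subset h)
  have hdisj : Disjoint D.Rpos (D.Rpos.image Neg.neg) := by
    rw [Finset.disjoint_right, Finset.forall_mem_image]
    intro β hβ hneg
    have hβu := (hu β (D.pos_subset hβ)).mp hβ
    have hnegu := (hu _ (D.pos_subset hneg)).mp hneg
    rw [inner_neg_left] at hnegu
    linarith
  rw [hunion, Finset.sum_union hdisj, Finset.sum_image neg_injective.injOn,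
    Finset.sum_add_distrib]

theorem sum_acutePairs_eq_two_mul_sum_rotPairs (τ : V → V) {h : V → ℝ}
    (hodd : ∀ α ∈ D.R, h (-α) = -h α) :
    ∑ p ∈ acutePairs D τ, ⟪p.1, p.2⟫ * (h p.1 * h p.2) =
      2 * ∑ p ∈ rotPairs D τ, ⟪p.1, p.2⟫ * (h p.1 * h p.2) := by
  rw [acutePairs, rotPairs, Finset.sum_filter, Finset.sum_filter, Finset.sum_product,
    Finset.sum_product, sum_roots_eq_sum_pos, Finset.mul_sum]
  refine Finset.sum_congr rfl fun α hα => ?_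
  rw [sum_roots_eq_sum_pos, sum_roots_eq_sum_pos, Finset.mul_sum, ← Finset.sum_add_distrib]
  refine Finset.sum_congr rfl fun β hβ => ?_
  simp only [rRefl_neg_left, inner_neg_left, inner_neg_right, neg_neg, hodd α (D.pos_subset hα),
    hodd β (D.pos_subset hβ)]
  by_cases hτ : (fun x => rRefl β (rRefl α x)) = τ
  · rcases lt_trichotomy ⟪α, β⟫ 0 with hneg | hzero | hpos
    · simp [hτ, hneg, hneg.not_gt, two_mul]
    · simp [hzero]
    · simp [hτ, hpos, hpos.not_gt, two_mul]
  · simp [hτ]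

theorem sum_rotPairs_eq_sum_rotPairs (hτ : τ ≠ id)
    (hk : IsWeylInvariant D k) {c s : V → ℝ}
    (hc : IsCothLike (D.R : Set V) c) (hs : IsCothLike (D.R : Set V) s) :
    ∑ p ∈ rotPairs D τ, k p.1 * k p.2 * ⟪p.1, p.2⟫ * (c p.1 * c p.2) =
      ∑ p ∈ rotPairs D τ, k p.1 * k p.2 * ⟪p.1, p.2⟫ * (s p.1 * s p.2) := by
  have htwice {c : V → ℝ} (hc : IsCothLike (D.R : Set V) c) :
      ∑ p ∈ acutePairs D τ, k p.1 * k p.2 * ⟪p.1, p.2⟫ * (c p.1 * c p.2) =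
        2 * ∑ p ∈ rotPairs D τ, k p.1 * k p.2 * ⟪p.1, p.2⟫ * (c p.1 * c p.2) := by
    have habsorb (p : V × V) : k p.1 * k p.2 * ⟪p.1, p.2⟫ * (c p.1 * c p.2) =
        ⟪p.1, p.2⟫ * ((k p.1 * c p.1) * (k p.2 * c p.2)) := by ring
    have hodd : ∀ α ∈ D.R, k (-α) * c (-α) = -(k α * c α) := fun α hα => by
      rw [hk.apply_neg hα, hc.neg, mul_neg]
    simpa only [habsorb] using
      sum_acutePairs_eq_two_mul_sum_rotPairs τ (h := fun α => k α * c α) hodd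
  have hacute := sum_acutePairs_eq_sum_acutePairs hτ hk hc hs
  rw [htwice hc, htwice hs] at hacute
  exact mul_left_cancel₀ two_ne_zero hacute

theorem HORegular.isCothLike_inner {x : V} (hx : HORegular D x) {c : ℝ → ℝ}
    (hc : IsCothLike {0}ᶜ c) : IsCothLike (D.R : Set V) (fun α => c ⟪α, x⟫) :=
  hc.comp ((innerₗ V).flip x).toAddMonoidHom hx

theorem exists_hoRegular_forall_inner_pos (D : HOData V) :
    ∃ u, HORegular D u ∧ ∀ α ∈ D.Rpos, 0 < ⟪α, u⟫ := by
  obtain ⟨u, hu⟩ := D.pos_char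
  have hpos : ∀ α ∈ D.Rpos, 0 < ⟪α, u⟫ := fun α hα => (hu α (D.pos_subset hα)).mp hα
  refine ⟨u, fun α hα => ?_, hpos⟩
  rcases D.pos_or_neg α hα with h | h
  · exact (hpos α h).ne'
  · have := hpos _ h
    rw [inner_neg_left, neg_pos] at this
    exact this.ne

theorem statement18_general (hτ : τ ≠ id)
    (hk : IsWeylInvariant D k) {x : V} (hx : HORegular D x) :
    ∑ p ∈ rotPairs D τ,
      k p.1 * k p.2 * ⟪p.1, p.2⟫ *
        (cothR (⟪p.1, x⟫ / 2) * cothR (⟪p.2, x⟫ / 2) - 1) = 0 := by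
  obtain ⟨u, hu, hpos⟩ := exists_hoRegular_forall_inner_pos D
  have hsum := sum_rotPairs_eq_sum_rotPairs hτ hk (hx.isCothLike_inner isCothLike_cothR_div_two)
    (hu.isCothLike_inner isCothLike_sign)
  have hsign : ∀ p ∈ rotPairs D τ,
      (SignType.sign ⟪p.1, u⟫ : ℝ) * (SignType.sign ⟪p.2, u⟫ : ℝ) = 1 := fun p hp => by
    obtain ⟨hα, hβ⟩ := Finset.mem_product.mp (Finset.mem_filter.mp hp).1
    rw [sign_pos (hpos _ hα), sign_pos (hpos _ hβ), SignType.coe_one, mul_one]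
  rw [Finset.sum_congr rfl fun p hp => congrArg _ (hsign p hp)] at hsum
  simp only [mul_sub, Finset.sum_sub_distrib, hsum, sub_self]

end RotationSums

/-- for every nontrivial rotation `τ = r_β ∘ r_α` (α, β positive roots)
and every regular `x`,
`Σ_{α,β ∈ R⁺, r_β r_α = τ} k_α k_β (α,β) (coth((α,x)/2) coth((β,x)/2) - 1) = 0`. -/
theorem statement18 (D : HOData E) (τ : E → E) (hτ : τ ≠ id)
    (hrot : ∃ α ∈ D.Rpos, ∃ β ∈ D.Rpos, τ = fun x => rRefl β (rRefl α x))
    (x : E) (hx : HORegular D x) :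
    ∑ p ∈ rotPairs D τ,
      D.k p.1 * D.k p.2 * ⟪p.1, p.2⟫ *
        (cothR (⟪p.1, x⟫ / 2) * cothR (⟪p.2, x⟫ / 2) - 1) = 0 := by
  exact statement18_general hτ D.k_inv hx
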